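/- Let V be a smooth q-vector field on an open set U ⊆ ℝⁿ and x ∈ U. Then V has constant coefficients on a neighbourhood of x if and only if there exist an open neighbourhood W of x and a torsion-free flat linear connection Γ on W such that ∇V = 0 on W. -/

import Mathlib

/-- Constant coefficients for a `q`-vector field (see context). -/
def HasConstantCoefficientsVecAt (n q : ℕ) (U : Set (Fin n → ℝ))
    (V : (Fin n → ℝ) → (((Fin n → ℝ) →L[ℝ] ℝ) [×q]→L[ℝ] ℝ)) (x : Fin n → ℝ) : Prop :=
  ∃ W : Set (Fin n → ℝ), IsOpen W ∧ x ∈ W ∧ W ⊆ U ∧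
    ∃ u : (Fin n → ℝ) → (Fin n → ℝ),
      ContDiffOn ℝ (⊤ : ℕ∞) u W ∧ Set.InjOn u W ∧ IsOpen (u '' W) ∧
      (∀ y ∈ W, Function.Bijective (fderiv ℝ u y)) ∧
      ∃ c : ((Fin n → ℝ) →L[ℝ] ℝ) [×q]→L[ℝ] ℝ,
        ∀ y ∈ W, ∀ w : Fin q → ((Fin n → ℝ) →L[ℝ] ℝ),
          c w = V y (fun i => (w i).comp (fderiv ℝ u y))

open Set Metric Filter Topology

theorem aux_two_le : (2 : WithTop ℕ∞) ≤ ((⊤ : ℕ∞) : WithTop ℕ∞) := by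
  exact WithTop.coe_le_coe.2 (le_top : (2 : ℕ∞) ≤ ⊤)

theorem aux_norm_lt {X F : Type*} [TopologicalSpace X] [NormedAddCommGroup F] {f : X → F} {x : X}
    (h : ContinuousAt f x) : ∀ᶠ y in 𝓝 x, ‖f y‖ < ‖f x‖ + 1 :=
  h.norm.eventually_lt continuousAt_const (lt_add_one _)

section Frob
variable {E M : Type*} [NormedAddCommGroup E] [NormedSpace ℝ E] [NormedRing M] [NormedAlgebra ℝ M]

set_option linter.unusedSectionVars false in
theorem aux_lipschitz (g : M) (hg : ‖g‖ ≤ 1 / 2) : LipschitzWith 1 (fun a : M => a * g) := by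
  refine LipschitzWith.of_dist_le_mul fun a b => ?_
  rw [dist_eq_norm, dist_eq_norm, ← sub_mul]
  calc ‖(a - b) * g‖ ≤ ‖a - b‖ * ‖g‖ := norm_mul_le _ _
    _ ≤ ‖a - b‖ * 1 := by gcongr; linarith
    _ = _ := by simp

theorem aux_ode [CompleteSpace M] (g : ℝ → M) (hg : ContinuousOn g (Icc 0 1))
    (hb : ∀ t ∈ Icc (0 : ℝ) 1, ‖g t‖ ≤ 1 / 2) :
    ∃ α : ℝ → M, α 0 = 1 ∧
      ∀ t ∈ Icc (0 : ℝ) 1, HasDerivWithinAt α (α t * g t) (Icc 0 1) t := by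
  have h : IsPicardLindelof (fun t (a : M) => a * g t) (tmin := 0) (tmax := 1)
      ⟨0, by simp⟩ (1 : M) ‖(1 : M)‖₊ 0 ‖(1 : M)‖₊ 1 := by
    refine ⟨fun t ht => (aux_lipschitz (g t) (hb t ht)).lipschitzOnWith,
      fun a _ => continuousOn_const.mul hg, fun t ht a ha => ?_, by simp⟩
    rw [mem_closedBall, dist_eq_norm] at ha
    have h1 : ‖a‖ ≤ 2 * ‖(1 : M)‖ := by
      have := norm_add_le (a - 1) 1
      rw [sub_add_cancel] at this
      simp only [coe_nnnorm] at ha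
      linarith
    calc ‖a * g t‖ ≤ ‖a‖ * ‖g t‖ := norm_mul_le _ _
      _ ≤ (2 * ‖(1 : M)‖) * (1 / 2) := by
          gcongr
          exact hb t ht
      _ = _ := by rw [coe_nnnorm]; ring
  exact h.exists_eq_forall_mem_Icc_hasDerivWithinAt₀

theorem aux_line_mem {x y : E} {r t : ℝ} (hy : y ∈ ball x r) (ht : t ∈ Icc (0 : ℝ) 1) :
    x + t • (y - x) ∈ ball x r := by
  rw [mem_ball, dist_eq_norm] at *
  rw [add_sub_cancel_left, norm_smul, Real.norm_of_nonneg ht.1]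
  exact lt_of_le_of_lt (mul_le_of_le_one_left (norm_nonneg _) ht.2) hy

theorem aux_estimate (Γ : E → E →L[ℝ] M) (DΓ : E → E →L[ℝ] E →L[ℝ] M) (x : E) (r B C K : ℝ)
    (hr1 : r ≤ 1) (hB0 : 0 ≤ B) (hC0 : 0 ≤ C) (hK0 : 0 ≤ K) (hBr : B * r ≤ 1 / 2)
    (hD : ∀ y ∈ ball x r, HasFDerivAt Γ (DΓ y) y)
    (hB : ∀ y ∈ ball x r, ‖Γ y‖ ≤ B) (hC : ∀ y ∈ ball x r, ‖DΓ y‖ ≤ C)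
    (hK : ∀ y ∈ ball x r, ∀ z ∈ ball x r, ‖Γ z - Γ y - DΓ y (z - y)‖ ≤ K * ‖z - y‖ ^ 2)
    (flat : ∀ y ∈ ball x r, ∀ v w,
      DΓ y v w - DΓ y w v + Γ y v * Γ y w - Γ y w * Γ y v = 0)
    (y z : E) (hy : y ∈ ball x r) (hz : z ∈ ball x r) (m : ℝ) (hm : 0 ≤ m) (a b : ℝ → M)
    (ham : ∀ t ∈ Icc (0 : ℝ) 1, ‖a t‖ ≤ m)
    (ha0 : a 0 = 1) (hb0 : b 0 = 1)
    (ha : ∀ t ∈ Icc (0 : ℝ) 1,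
      HasDerivWithinAt a (a t * Γ (x + t • (y - x)) (y - x)) (Icc 0 1) t)
    (hb : ∀ t ∈ Icc (0 : ℝ) 1,
      HasDerivWithinAt b (b t * Γ (x + t • (z - x)) (z - x)) (Icc 0 1) t) :
    ‖b 1 - a 1 * (1 + Γ y (z - y))‖ ≤
      m * (C + K + B * (B + C + 2 * K)) * gronwallBound 0 1 1 1 * ‖z - y‖ ^ 2 := by
  set h := z - y with hh
  set e := y - x with he
  have hzx : z - x = e + h := by simp [hh, he]
  have hen : ‖e + h‖ ≤ 1 := by
    rw [← hzx, ← dist_eq_norm]; exact (le_of_lt hz).trans hr1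
  have hhn : ‖h‖ ≤ 2 := by
    have h1 : ‖e‖ ≤ 1 := by rw [he, ← dist_eq_norm]; exact (le_of_lt hy).trans hr1
    have := norm_sub_le (e + h) e
    rw [add_sub_cancel_left] at this
    linarith
  let c : ℝ → M := fun t => a t * (1 + t • Γ (x + t • e) h)
  let c' : ℝ → M := fun t => (a t * Γ (x + t • e) e) * (1 + t • Γ (x + t • e) h) +
    a t * (t • DΓ (x + t • e) e h + Γ (x + t • e) h)
  have hc : ∀ t ∈ Icc (0 : ℝ) 1, HasDerivWithinAt c (c' t) (Icc 0 1) t := by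
    intro t ht
    refine (ha t ht).mul ?_
    have h1 : HasDerivAt (fun t : ℝ => x + t • e) e t := by
      simpa using ((hasDerivAt_id t).smul_const e).const_add x
    have h2 : HasDerivAt (fun t : ℝ => Γ (x + t • e)) (DΓ (x + t • e) e) t :=
      (hD _ (aux_line_mem hy ht)).comp_hasDerivAt t h1
    have h3 : HasDerivAt (fun t : ℝ => Γ (x + t • e) h) (DΓ (x + t • e) e h) t := by
      simpa using h2.clm_apply (hasDerivAt_const t h)
    have h4 := (hasDerivAt_id t).smul h3
    simpa using (h4.const_add 1).hasDerivWithinAt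
  have hIci : ∀ {f : ℝ → M} {f' : M} {t : ℝ}, t ∈ Ico (0 : ℝ) 1 →
      HasDerivWithinAt f f' (Icc 0 1) t → HasDerivWithinAt f f' (Ici t) t := by
    intro f f' t ht hf
    refine hf.mono_of_mem_nhdsWithin ?_
    exact mem_of_superset (Icc_mem_nhdsGE ht.2) (Icc_subset_Icc_left ht.1)
  have key : ∀ t ∈ Ico (0 : ℝ) 1, dist (c' t) (c t * Γ (x + t • (z - x)) (z - x)) ≤
      m * (C + K + B * (B + C + 2 * K)) * ‖h‖ ^ 2 := by
    intro t ht'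
    have ht : t ∈ Icc (0 : ℝ) 1 := Ico_subset_Icc_self ht'
    have hp := aux_line_mem hy ht
    have hq := aux_line_mem hz ht
    have hfl := flat _ hp e h
    have hta := hK _ hp _ hq
    have hpB := hB _ hp
    have hpC := hC _ hp
    have hqp : x + t • (z - x) - (x + t • (y - x)) = t • h := by
      rw [hzx, ← he, smul_add]; abel
    rw [hqp] at hta
    rw [← he] at hta hpB hpC hfl
    set G := Γ (x + t • e) with hG
    set D := DΓ (x + t • e) with hDd
    set ρ := Γ (x + t • (z - x)) - G - D (t • h) with hρ
    have hΓz : Γ (x + t • (z - x)) = G + t • D h + ρ := by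
      rw [hρ, map_smul]; abel
    have hth : ‖t • h‖ ≤ ‖h‖ := by
      rw [norm_smul, Real.norm_of_nonneg ht.1]
      exact mul_le_of_le_one_left (norm_nonneg _) ht.2
    have hρn : ‖ρ‖ ≤ K * ‖h‖ ^ 2 := hta.trans (by gcongr)
    have hDeh : D e h = D h e - (G e * G h - G h * G e) := by
      rw [← sub_eq_zero, ← hfl]; abel
    have e1 : c' t - c t * Γ (x + t • (z - x)) (z - x) =
        -(a t * (t • D h h + ρ (e + h) + t • (G h * (G h + (t • D h + ρ) (e + h))))) := by
      rw [hΓz, hzx]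
      simp only [c, c', ← hG, ← hDd, hDeh, add_apply,
        smul_apply, map_add, mul_add, add_mul, mul_sub, smul_add, smul_sub,
        mul_one, smul_mul_assoc, mul_smul_comm, mul_assoc]
      module
    rw [dist_eq_norm, e1, norm_neg]
    have b1 : ‖t • D h h‖ ≤ C * ‖h‖ ^ 2 := by
      rw [norm_smul, Real.norm_of_nonneg ht.1]
      calc t * ‖D h h‖ ≤ 1 * (‖D‖ * ‖h‖ * ‖h‖) := by
            gcongr
            · exact ht.2
            · exact D.le_opNorm₂ h h
        _ ≤ 1 * (C * ‖h‖ * ‖h‖) := by gcongr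
        _ = _ := by ring
    have b2 : ‖ρ (e + h)‖ ≤ K * ‖h‖ ^ 2 := by
      calc ‖ρ (e + h)‖ ≤ ‖ρ‖ * ‖e + h‖ := ρ.le_opNorm _
        _ ≤ (K * ‖h‖ ^ 2) * 1 := by gcongr
        _ = _ := by ring
    have b3 : ‖G h‖ ≤ B * ‖h‖ := (G.le_opNorm _).trans (by gcongr)
    have b4 : ‖(t • D h + ρ) (e + h)‖ ≤ (C + 2 * K) * ‖h‖ := by
      have h1 : ‖t • D h‖ ≤ C * ‖h‖ := by
        rw [← map_smul]
        calc ‖D (t • h)‖ ≤ ‖D‖ * ‖t • h‖ := D.le_opNorm _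
          _ ≤ C * ‖h‖ := by gcongr
      have h2 : K * ‖h‖ ^ 2 ≤ 2 * K * ‖h‖ := by
        calc K * ‖h‖ ^ 2 = K * ‖h‖ * ‖h‖ := by ring
          _ ≤ K * ‖h‖ * 2 := by gcongr
          _ = _ := by ring
      calc ‖(t • D h + ρ) (e + h)‖ ≤ ‖t • D h + ρ‖ * ‖e + h‖ := ContinuousLinearMap.le_opNorm _ _
        _ ≤ ((C + 2 * K) * ‖h‖) * 1 := by
            gcongr
            refine (norm_add_le _ _).trans ?_
            linarith
        _ = _ := by ring
    have b5 : ‖t • (G h * (G h + (t • D h + ρ) (e + h)))‖ ≤ B * (B + C + 2 * K) * ‖h‖ ^ 2 := by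
      rw [norm_smul, Real.norm_of_nonneg ht.1]
      calc t * ‖G h * (G h + (t • D h + ρ) (e + h))‖
          ≤ 1 * (‖G h‖ * (‖G h‖ + ‖(t • D h + ρ) (e + h)‖)) := by
            gcongr
            · exact ht.2
            · refine (norm_mul_le _ _).trans ?_
              gcongr
              exact norm_add_le _ _
        _ ≤ 1 * (B * ‖h‖ * (B * ‖h‖ + (C + 2 * K) * ‖h‖)) := by gcongr
        _ = _ := by ring
    calc _ ≤ ‖a t‖ * ‖t • D h h + ρ (e + h) + t • (G h * (G h + (t • D h + ρ) (e + h)))‖ :=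
          norm_mul_le _ _
      _ ≤ m * (C * ‖h‖ ^ 2 + K * ‖h‖ ^ 2 + B * (B + C + 2 * K) * ‖h‖ ^ 2) := by
          gcongr
          · exact ham t ht
          · exact (norm_add₃_le).trans (by linarith)
      _ = _ := by ring
  have hG1 : ∀ t ∈ Icc (0 : ℝ) 1, ‖Γ (x + t • (z - x)) (z - x)‖ ≤ 1 / 2 := by
    intro t ht
    have hq := aux_line_mem hz ht
    calc _ ≤ ‖Γ (x + t • (z - x))‖ * ‖z - x‖ := ContinuousLinearMap.le_opNorm _ _
      _ ≤ B * r := by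
          gcongr
          · exact hB _ hq
          · rw [← dist_eq_norm]; exact le_of_lt hz
      _ ≤ _ := hBr
  have := dist_le_of_approx_trajectories_ODE_of_mem (a := 0) (b := 1) (K := 1)
    (v := fun t (u : M) => u * Γ (x + t • (z - x)) (z - x)) (s := fun _ => univ)
    (f := b) (g := c) (f' := fun t => b t * Γ (x + t • (z - x)) (z - x)) (g' := c')
    (εf := 0) (εg := m * (C + K + B * (B + C + 2 * K)) * ‖h‖ ^ 2) (δ := 0)
    (fun t ht => (aux_lipschitz _ (hG1 t (Ico_subset_Icc_self ht))).lipschitzOnWith)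
    (fun t ht => (hb t ht).continuousWithinAt)
    (fun t ht => hIci ht (hb t (Ico_subset_Icc_self ht)))
    (fun t ht => by simp) (fun t ht => trivial)
    (fun t ht => (hc t ht).continuousWithinAt)
    (fun t ht => hIci ht (hc t (Ico_subset_Icc_self ht)))
    key (fun t ht => trivial) (by simp [c, ha0, hb0]) 1 (by simp)
  have hc1 : c 1 = a 1 * (1 + Γ y h) := by simp [c, he]
  rw [dist_eq_norm, hc1] at this
  refine this.trans (le_of_eq ?_)
  simp [gronwallBound]
  ring

theorem aux_frobenius [CompleteSpace M] (Γ : E → E →L[ℝ] M) (x : E) (hΓ : ContDiffAt ℝ 2 Γ x)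
    (flat : ∀ᶠ y in 𝓝 x, ∀ v w,
      fderiv ℝ Γ y v w - fderiv ℝ Γ y w v + Γ y v * Γ y w - Γ y w * Γ y v = 0) :
    ∃ r > 0, ∃ A : E → M, A x = 1 ∧
      ∀ y ∈ ball x r, HasFDerivAt A ((ContinuousLinearMap.mul ℝ M (A y)).comp (Γ y)) y := by
  have hD : ∀ᶠ y in 𝓝 x, HasFDerivAt Γ (fderiv ℝ Γ y) y := by
    filter_upwards [(hΓ.of_le (m := 1) (by norm_num)).eventually (by decide)] with y hy
    exact (hy.differentiableAt (by simp)).hasFDerivAt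
  have hD1 : ContDiffAt ℝ 1 (fderiv ℝ Γ) x := hΓ.fderiv_right (by norm_num)
  obtain ⟨K, s, hs, hK⟩ := hD1.exists_lipschitzOnWith
  have hB : ∀ᶠ y in 𝓝 x, ‖Γ y‖ < ‖Γ x‖ + 1 :=
    hΓ.continuousAt.norm.eventually_lt continuousAt_const (lt_add_one _)
  have hC : ∀ᶠ y in 𝓝 x, ‖fderiv ℝ Γ y‖ < ‖fderiv ℝ Γ x‖ + 1 := by
    have h1 : ContinuousAt (fderiv ℝ Γ) x := hD1.continuousAt
    exact aux_norm_lt (X := E) (F := E →L[ℝ] E →L[ℝ] M) (f := fderiv ℝ Γ) (x := x) h1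
  obtain ⟨r₀, hr₀, hall⟩ := Metric.eventually_nhds_iff_ball.1
    (flat.and (hD.and ((show ∀ᶠ y in 𝓝 x, y ∈ s from hs).and (hB.and hC))))
  set B := ‖Γ x‖ + 1 with hBd
  set C := ‖fderiv ℝ Γ x‖ + 1 with hCd
  have hB0 : 0 < B := by positivity
  have hC0 : 0 < C := by positivity
  set r := min r₀ (min 1 (1 / (2 * B))) with hr
  have hr0 : 0 < r := by positivity
  have hsub : ball x r ⊆ ball x r₀ := ball_subset_ball (min_le_left _ _)
  have hr1 : r ≤ 1 := (min_le_right _ _).trans (min_le_left _ _)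
  have hBr : B * r ≤ 1 / 2 := by
    have : r ≤ 1 / (2 * B) := (min_le_right _ _).trans (min_le_right _ _)
    calc B * r ≤ B * (1 / (2 * B)) := by gcongr
      _ = 1 / 2 := by field_simp
  have hTaylor : ∀ y ∈ ball x r, ∀ z ∈ ball x r,
      ‖Γ z - Γ y - fderiv ℝ Γ y (z - y)‖ ≤ K * ‖z - y‖ ^ 2 := by
    intro y hy z hz
    have hseg : segment ℝ y z ⊆ ball x r := (convex_ball x r).segment_subset hy hz
    have := (convex_segment (𝕜 := ℝ) y z).norm_image_sub_le_of_norm_hasFDerivWithin_le'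
      (f := Γ) (f' := fderiv ℝ Γ) (φ := fderiv ℝ Γ y) (C := K * ‖z - y‖)
      (fun p hp => ((hall p (hsub (hseg hp))).2.1).hasFDerivWithinAt)
      (fun p hp => by
        refine (hK.norm_sub_le (hall p (hsub (hseg hp))).2.2.1 (hall y (hsub hy)).2.2.1).trans ?_
        gcongr
        exact norm_sub_le_of_mem_segment hp)
      (left_mem_segment ℝ y z) (right_mem_segment ℝ y z)
    refine this.trans (le_of_eq (by ring))
  have hbd : ∀ z ∈ ball x r, ∀ t ∈ Icc (0 : ℝ) 1, ‖Γ (x + t • (z - x)) (z - x)‖ ≤ 1 / 2 := by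
    intro z hz t ht
    have hq := aux_line_mem hz ht
    calc _ ≤ ‖Γ (x + t • (z - x))‖ * ‖z - x‖ := ContinuousLinearMap.le_opNorm _ _
      _ ≤ B * r := by
          gcongr
          · exact (hall _ (hsub hq)).2.2.2.1.le
          · rw [← dist_eq_norm]; exact le_of_lt hz
      _ ≤ _ := hBr
  have hode : ∀ y : E, ∃ α : ℝ → M, y ∈ ball x r → α 0 = 1 ∧ ∀ t ∈ Icc (0 : ℝ) 1,
      HasDerivWithinAt α (α t * Γ (x + t • (y - x)) (y - x)) (Icc 0 1) t := by
    intro y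
    by_cases hy : y ∈ ball x r
    · obtain ⟨α, h⟩ := aux_ode (fun t => Γ (x + t • (y - x)) (y - x)) (by
        intro t ht
        have h1 : ContinuousAt Γ (x + t • (y - x)) :=
          (hall _ (hsub (aux_line_mem hy ht))).2.1.continuousAt
        have h2 : ContinuousAt (fun t : ℝ => x + t • (y - x)) t := by fun_prop
        have h3 : ContinuousAt (fun t : ℝ => Γ (x + t • (y - x))) t :=
          ContinuousAt.comp (f := fun t : ℝ => x + t • (y - x)) h1 h2
        exact (h3.clm_apply continuousAt_const).continuousWithinAt) (hbd y hy)
      exact ⟨α, fun _ => h⟩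
    · exact ⟨0, fun h => (hy h).elim⟩
  choose α hα using hode
  refine ⟨r, hr0, fun y => α y 1, ?_, ?_⟩
  · obtain ⟨h0, h1⟩ := hα x (mem_ball_self hr0)
    have := constant_of_has_deriv_right_zero (f := α x) (a := 0) (b := 1)
      (fun t ht => (h1 t ht).continuousWithinAt) (fun t ht => by
        have := h1 t (Ico_subset_Icc_self ht)
        simp only [sub_self, map_zero, mul_zero] at this
        exact this.mono_of_mem_nhdsWithin
          (mem_of_superset (Icc_mem_nhdsGE ht.2) (Icc_subset_Icc_left ht.1)))
      1 (by simp)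
    simpa [h0] using this
  · intro y hy
    obtain ⟨ha0, ha⟩ := hα y hy
    obtain ⟨m, hm⟩ := isCompact_Icc.exists_bound_of_continuousOn
      (f := α y) (s := Icc (0 : ℝ) 1) (fun t ht => (ha t ht).continuousWithinAt)
    have hm0 : 0 ≤ m := (norm_nonneg _).trans (hm 0 (by simp))
    set N := m * (C + K + B * (B + C + 2 * K)) * gronwallBound 0 1 1 1
    rw [hasFDerivAt_iff_isLittleO]
    have hO : (fun z => α z 1 - α y 1 -
        ((ContinuousLinearMap.mul ℝ M (α y 1)).comp (Γ y)) (z - y)) =O[𝓝 y]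
        fun z => ‖z - y‖ ^ 2 := by
      refine Asymptotics.IsBigO.of_bound N ?_
      filter_upwards [isOpen_ball.mem_nhds hy] with z hz
      obtain ⟨hb0, hb⟩ := hα z hz
      have := aux_estimate Γ (fderiv ℝ Γ) x r B C K hr1 hB0.le hC0.le K.2 hBr
        (fun p hp => (hall p (hsub hp)).2.1) (fun p hp => (hall p (hsub hp)).2.2.2.1.le)
        (fun p hp => (hall p (hsub hp)).2.2.2.2.le) hTaylor (fun p hp => (hall p (hsub hp)).1)
        y z hy hz m hm0 (α y) (α z) hm ha0 hb0 ha hb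
      simp only [norm_pow, norm_norm]
      refine le_trans (le_of_eq ?_) this
      simp [mul_add, sub_sub]
    refine hO.trans_isLittleO ?_
    have h1 : (fun z : E => z - y) =o[𝓝 y] fun _ => (1 : ℝ) := by
      rw [Asymptotics.isLittleO_one_iff]
      have : Continuous fun z : E => z - y := by fun_prop
      simpa using this.tendsto y
    have := (Asymptotics.isBigO_refl (fun z : E => ‖z - y‖) (𝓝 y)).mul_isLittleO h1.norm_left
    simpa [pow_two] using this

end Frob


theorem aux_deriv {n q : ℕ}
    {V : (Fin n → ℝ) → (((Fin n → ℝ) →L[ℝ] ℝ) [×q]→L[ℝ] ℝ)}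
    {V' : (Fin n → ℝ) →L[ℝ] (((Fin n → ℝ) →L[ℝ] ℝ) [×q]→L[ℝ] ℝ)}
    {A : (Fin n → ℝ) → ((Fin n → ℝ) →L[ℝ] (Fin n → ℝ))}
    {A' : (Fin n → ℝ) →L[ℝ] ((Fin n → ℝ) →L[ℝ] (Fin n → ℝ))} {y : Fin n → ℝ}
    (hV : HasFDerivAt V V' y) (hA : HasFDerivAt A A' y)
    (w : Fin q → ((Fin n → ℝ) →L[ℝ] ℝ)) :
    ∃ L : (Fin n → ℝ) →L[ℝ] ℝ,
      HasFDerivAt (fun y => V y (fun i => (w i).comp (A y))) L y ∧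
      ∀ v, L v = V' v (fun i => (w i).comp (A y)) +
        ∑ h, V y (Function.update (fun i => (w i).comp (A y)) h ((w h).comp (A' v))) := by
  have hg : ∀ i, HasFDerivAt (fun y => (w i).comp (A y))
      ((ContinuousLinearMap.compL ℝ (Fin n → ℝ) (Fin n → ℝ) ℝ (w i)).comp A') y := fun i =>
    (ContinuousLinearMap.compL ℝ (Fin n → ℝ) (Fin n → ℝ) ℝ (w i)).hasFDerivAt.comp y hA
  refine ⟨_, hV.continuousMultilinearMap_apply hg, fun v => ?_⟩
  simp [ContinuousMultilinearMap.toContinuousLinearMap]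

theorem aux_forward (n q : ℕ)
    (U : Set (Fin n → ℝ)) (hU : IsOpen U)
    (V : (Fin n → ℝ) → (((Fin n → ℝ) →L[ℝ] ℝ) [×q]→L[ℝ] ℝ))
    (hV : ContDiffOn ℝ (⊤ : ℕ∞) V U)
    (W : Set (Fin n → ℝ)) (hW : IsOpen W) (hWU : W ⊆ U)
    (u : (Fin n → ℝ) → (Fin n → ℝ)) (hu : ContDiffOn ℝ (⊤ : ℕ∞) u W)
    (hbij : ∀ y ∈ W, Function.Bijective (fderiv ℝ u y))
    (c : ((Fin n → ℝ) →L[ℝ] ℝ) [×q]→L[ℝ] ℝ)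
    (hc : ∀ y ∈ W, ∀ w : Fin q → ((Fin n → ℝ) →L[ℝ] ℝ),
          c w = V y (fun i => (w i).comp (fderiv ℝ u y))) :
    ∃ Γ : (Fin n → ℝ) → ((Fin n → ℝ) →L[ℝ] (Fin n → ℝ) →L[ℝ] (Fin n → ℝ)),
          ContDiffOn ℝ (⊤ : ℕ∞) Γ W ∧
          (∀ y ∈ W, ∀ v w : Fin n → ℝ, Γ y v w = Γ y w v) ∧
          (∀ y ∈ W, ∀ v w z : Fin n → ℝ,
            fderiv ℝ (fun t => Γ t w z) y v - fderiv ℝ (fun t => Γ t v z) y w +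
              Γ y v (Γ y w z) - Γ y w (Γ y v z) = 0) ∧
          (∀ y ∈ W, ∀ v : Fin n → ℝ, ∀ w : Fin q → ((Fin n → ℝ) →L[ℝ] ℝ),
            fderiv ℝ V y v w +
              ∑ h : Fin q, V y (Function.update w h ((w h).comp (Γ y v))) = 0) := by
  set A : (Fin n → ℝ) → ((Fin n → ℝ) →L[ℝ] (Fin n → ℝ)) := fderiv ℝ u with hA
  have hAs : ContDiffOn ℝ (⊤ : ℕ∞) A W := hu.fderiv_of_isOpen hW (by simp)
  have hAs' : ContDiffOn ℝ (⊤ : ℕ∞) (fderiv ℝ A) W := hAs.fderiv_of_isOpen hW (by simp)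
  have hunit : ∀ y ∈ W, IsUnit (A y) := by
    intro y hy
    rw [ContinuousLinearMap.isUnit_iff_bijective]
    exact hbij y hy
  let Γ : (Fin n → ℝ) → ((Fin n → ℝ) →L[ℝ] (Fin n → ℝ) →L[ℝ] (Fin n → ℝ)) := fun y =>
    (ContinuousLinearMap.mul ℝ ((Fin n → ℝ) →L[ℝ] (Fin n → ℝ)) (Ring.inverse (A y))).comp
      (fderiv ℝ A y)
  have hΓa : ∀ y v, Γ y v = Ring.inverse (A y) * fderiv ℝ A y v := fun y v => rfl
  have hAΓ : ∀ y ∈ W, ∀ v, A y * Γ y v = fderiv ℝ A y v := by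
    intro y hy v
    rw [hΓa, ← mul_assoc, Ring.mul_inverse_cancel _ (hunit y hy), one_mul]
  have hinv : ContDiffOn ℝ (⊤ : ℕ∞) (fun y => Ring.inverse (A y)) W := by
    intro y hy
    obtain ⟨a, ha⟩ := hunit y hy
    have h1 := contDiffAt_ringInverse ℝ (n := (⊤ : ℕ∞)) a
    rw [ha] at h1
    exact h1.comp_contDiffWithinAt y (hAs y hy)
  have hΓs : ContDiffOn ℝ (⊤ : ℕ∞) Γ W := by
    have h1 : ContDiffOn ℝ (⊤ : ℕ∞) (fun y => ContinuousLinearMap.mul ℝ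
      ((Fin n → ℝ) →L[ℝ] (Fin n → ℝ)) (Ring.inverse (A y))) W :=
      (ContinuousLinearMap.contDiff _).comp_contDiffOn hinv
    exact h1.clm_comp hAs'
  have hdA : ∀ y ∈ W, HasFDerivAt A (fderiv ℝ A y) y := fun y hy =>
    ((hAs.contDiffAt (hW.mem_nhds hy)).differentiableAt (by simp)).hasFDerivAt
  have hdΓ : ∀ y ∈ W, HasFDerivAt Γ (fderiv ℝ Γ y) y := fun y hy =>
    ((hΓs.contDiffAt (hW.mem_nhds hy)).differentiableAt (by simp)).hasFDerivAt
  have hdA' : ∀ y ∈ W, HasFDerivAt (fderiv ℝ A) (fderiv ℝ (fderiv ℝ A) y) y := fun y hy =>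
    ((hAs'.contDiffAt (hW.mem_nhds hy)).differentiableAt (by simp)).hasFDerivAt
  have hdV : ∀ y ∈ W, HasFDerivAt V (fderiv ℝ V y) y := fun y hy =>
    ((hV.contDiffAt (hU.mem_nhds (hWU hy))).differentiableAt (by simp)).hasFDerivAt
  refine ⟨Γ, hΓs, ?_, ?_, ?_⟩
  · intro y hy v w
    have hs := (hu.contDiffAt (hW.mem_nhds hy)).isSymmSndFDerivAt (by simpa using aux_two_le)
    have : fderiv ℝ A y v w = fderiv ℝ A y w v := hs v w
    rw [hΓa, hΓa]
    change Ring.inverse (A y) (fderiv ℝ A y v w) = Ring.inverse (A y) (fderiv ℝ A y w v)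
    rw [this]
  · intro y hy v w z
    have hs := (hAs.contDiffAt (hW.mem_nhds hy)).isSymmSndFDerivAt (by simpa using aux_two_le)
    have hap : ∀ v w z, fderiv ℝ (fun t => Γ t w z) y v = fderiv ℝ Γ y v w z := by
      intro v w z
      have h1 := ((hdΓ y hy).clm_apply (hasFDerivAt_const w y)).clm_apply (hasFDerivAt_const z y)
      rw [h1.fderiv]
      simp
    have hder : ∀ v w, fderiv ℝ A y v * Γ y w + A y * fderiv ℝ Γ y v w =
        fderiv ℝ (fderiv ℝ A) y v w := by
      intro v w
      have h1 := (hdA y hy).mul' ((hdΓ y hy).clm_apply (hasFDerivAt_const w y))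
      have h2 := (hdA' y hy).clm_apply (hasFDerivAt_const w y)
      have h3 : (fun y => A y * Γ y w) =ᶠ[𝓝 y] fun y => fderiv ℝ A y w := by
        filter_upwards [hW.mem_nhds hy] with t ht using hAΓ t ht w
      have h4 := congrArg (fun L => L v) ((h2.congr_of_eventuallyEq h3).unique h1)
      simp at h4
      rw [h4, add_comm]
    have e1 := hder v w
    have e2 := hder w v
    rw [hs v w, ← e2, ← hAΓ y hy v, ← hAΓ y hy w] at e1
    have e3 : A y * (fderiv ℝ Γ y v w - fderiv ℝ Γ y w v + Γ y v * Γ y w - Γ y w * Γ y v) = 0 := by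
      rw [← sub_eq_zero] at e1
      rw [← e1]
      simp only [mul_add, mul_sub, mul_assoc]
      abel
    have e4 : fderiv ℝ Γ y v w - fderiv ℝ Γ y w v + Γ y v * Γ y w - Γ y w * Γ y v = 0 :=
      (hunit y hy).mul_right_eq_zero.1 e3
    rw [hap, hap]
    exact congrArg (fun L => L z) e4
  · intro y hy v w
    obtain ⟨L, hL, hLv⟩ := aux_deriv (hdV y hy) (hdA y hy)
      (fun i => (w i).comp (Ring.inverse (A y)))
    have h0 : (fun t => V t (fun i => ((w i).comp (Ring.inverse (A y))).comp (A t))) =ᶠ[𝓝 y]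
        fun _ => c (fun i => (w i).comp (Ring.inverse (A y))) := by
      filter_upwards [hW.mem_nhds hy] with t ht using (hc t ht _).symm
    have h1 : L = 0 := hL.unique ((hasFDerivAt_const _ y).congr_of_eventuallyEq h0)
    have h2 := hLv v
    have h3 : (fun i => ((w i).comp (Ring.inverse (A y))).comp (A y)) = w := by
      funext i
      rw [ContinuousLinearMap.comp_assoc]
      have : (Ring.inverse (A y)).comp (A y) = 1 := Ring.inverse_mul_cancel _ (hunit y hy)
      rw [this]; rfl
    rw [h3, h1] at h2
    exact h2.symm

theorem aux_backward (n q : ℕ)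
    (U : Set (Fin n → ℝ)) (hU : IsOpen U)
    (V : (Fin n → ℝ) → (((Fin n → ℝ) →L[ℝ] ℝ) [×q]→L[ℝ] ℝ))
    (hV : ContDiffOn ℝ (⊤ : ℕ∞) V U) (x : Fin n → ℝ)
    (W : Set (Fin n → ℝ)) (hW : IsOpen W) (hxW : x ∈ W) (hWU : W ⊆ U)
    (Γ : (Fin n → ℝ) → ((Fin n → ℝ) →L[ℝ] (Fin n → ℝ) →L[ℝ] (Fin n → ℝ)))
    (hΓ : ContDiffOn ℝ (⊤ : ℕ∞) Γ W)
    (htor : ∀ y ∈ W, ∀ v w : Fin n → ℝ, Γ y v w = Γ y w v)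
    (hflat : ∀ y ∈ W, ∀ v w z : Fin n → ℝ,
            fderiv ℝ (fun t => Γ t w z) y v - fderiv ℝ (fun t => Γ t v z) y w +
              Γ y v (Γ y w z) - Γ y w (Γ y v z) = 0)
    (hpar : ∀ y ∈ W, ∀ v : Fin n → ℝ, ∀ w : Fin q → ((Fin n → ℝ) →L[ℝ] ℝ),
            fderiv ℝ V y v w +
              ∑ h : Fin q, V y (Function.update w h ((w h).comp (Γ y v))) = 0) :
    HasConstantCoefficientsVecAt n q U V x := by
  have hdΓ : ∀ y ∈ W, HasFDerivAt Γ (fderiv ℝ Γ y) y := fun y hy =>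
    ((hΓ.contDiffAt (hW.mem_nhds hy)).differentiableAt (by simp)).hasFDerivAt
  have hdV : ∀ y ∈ W, HasFDerivAt V (fderiv ℝ V y) y := fun y hy =>
    ((hV.contDiffAt (hU.mem_nhds (hWU hy))).differentiableAt (by simp)).hasFDerivAt
  obtain ⟨r₁, hr₁, A, hA1, hA⟩ := aux_frobenius Γ x
    ((hΓ.contDiffAt (hW.mem_nhds hxW)).of_le aux_two_le) (by
      filter_upwards [hW.mem_nhds hxW] with y hy v w
      have hap : ∀ v w z, fderiv ℝ (fun t => Γ t w z) y v = fderiv ℝ Γ y v w z := by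
        intro v w z
        have h1 := ((hdΓ y hy).clm_apply (hasFDerivAt_const w y)).clm_apply (hasFDerivAt_const z y)
        rw [h1.fderiv]
        simp
      ext1 z
      have := hflat y hy v w z
      rw [hap, hap] at this
      exact this)
  have hunit : ∀ᶠ y in 𝓝 x, IsUnit (A y) := by
    have hc : ContinuousAt A x := (hA x (mem_ball_self hr₁)).continuousAt
    refine hc.eventually (Units.isOpen.mem_nhds ?_)
    rw [hA1]; exact isUnit_one
  obtain ⟨r, hr, hall⟩ := Metric.eventually_nhds_iff_ball.1
    (hunit.and ((show ∀ᶠ y in 𝓝 x, y ∈ W from hW.mem_nhds hxW).and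
      (show ∀ᶠ y in 𝓝 x, y ∈ ball x r₁ from ball_mem_nhds x hr₁)))
  have hdA := fun y hy => hA y (hall y hy).2.2
  have hfA : ∀ y ∈ ball x r, fderiv ℝ A y =
      (ContinuousLinearMap.mul ℝ ((Fin n → ℝ) →L[ℝ] (Fin n → ℝ)) (A y)).comp (Γ y) :=
    fun y hy => (hdA y hy).fderiv
  have hAdiff : DifferentiableOn ℝ A (ball x r) := fun y hy =>
    (hdA y hy).differentiableAt.differentiableWithinAt
  have hAn : ∀ k : ℕ, ContDiffOn ℝ k A (ball x r) := by
    intro k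
    induction k with
    | zero => exact contDiffOn_zero.2 hAdiff.continuousOn
    | succ k ih =>
      push_cast
      rw [contDiffOn_succ_iff_fderiv_of_isOpen isOpen_ball]
      refine ⟨hAdiff, by simp, ?_⟩
      have h1 : ContDiffOn ℝ k (fun y => ContinuousLinearMap.mul ℝ
        ((Fin n → ℝ) →L[ℝ] (Fin n → ℝ)) (A y)) (ball x r) :=
        (ContinuousLinearMap.contDiff _).comp_contDiffOn ih
      have h2 : ContDiffOn ℝ k Γ (ball x r) :=
        (hΓ.mono fun y hy => (hall y hy).2.1).of_le (by exact_mod_cast le_top)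
      exact (h1.clm_comp h2).congr hfA
  have hAs : ContDiffOn ℝ (⊤ : ℕ∞) A (ball x r) := contDiffOn_infty.2 hAn
  obtain ⟨u, hu⟩ := (convex_ball x r).exists_forall_hasFDerivAt_of_fderiv_symmetric isOpen_ball
    hAdiff (fun y hy v w => by
      rw [hfA y hy]
      change A y (Γ y v w) = A y (Γ y w v)
      rw [htor y (hall y hy).2.1])
  have hfu : ∀ y ∈ ball x r, fderiv ℝ u y = A y := fun y hy => (hu y hy).fderiv
  have hus : ContDiffOn ℝ (⊤ : ℕ∞) u (ball x r) := by
    rw [contDiffOn_infty_iff_fderiv_of_isOpen isOpen_ball]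
    exact ⟨fun y hy => (hu y hy).differentiableAt.differentiableWithinAt, hAs.congr hfu⟩
  have hxb : x ∈ ball x r := mem_ball_self hr
  have hux : ContDiffAt ℝ (⊤ : ℕ∞) u x := hus.contDiffAt (isOpen_ball.mem_nhds hxb)
  have hux' : HasFDerivAt u
      ((ContinuousLinearEquiv.refl ℝ (Fin n → ℝ) : (Fin n → ℝ) ≃L[ℝ] (Fin n → ℝ)) :
        (Fin n → ℝ) →L[ℝ] (Fin n → ℝ)) x := by
    have := hu x hxb
    rw [hA1] at this
    exact this
  let φ := hux.toOpenPartialHomeomorph u hux' (by simp)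
  have hφ : x ∈ φ.source := hux.mem_toOpenPartialHomeomorph_source hux' (by simp)
  refine ⟨ball x r ∩ φ.source, isOpen_ball.inter φ.open_source, ⟨hxb, hφ⟩,
    fun y hy => hWU (hall y hy.1).2.1, u, hus.mono inter_subset_left,
    φ.injOn.mono inter_subset_right,
    φ.isOpen_image_of_subset_source (isOpen_ball.inter φ.open_source) inter_subset_right, ?_, ?_⟩
  · intro y hy
    rw [hfu y hy.1]
    exact ContinuousLinearMap.isUnit_iff_bijective.1 (hall y hy.1).1
  · refine ⟨V x, fun y hy w => ?_⟩
    have hd : ∀ y ∈ ball x r, HasFDerivAt (fun y => V y (fun i => (w i).comp (A y)))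
        (0 : (Fin n → ℝ) →L[ℝ] ℝ) y := by
      intro y hy
      obtain ⟨L, hL, hLv⟩ := aux_deriv (hdV y (hall y hy).2.1) (hdA y hy) w
      have : L = 0 := by
        ext1 v
        rw [hLv]
        exact hpar y (hall y hy).2.1 v (fun i => (w i).comp (A y))
      rwa [this] at hL
    have := isOpen_ball.is_const_of_fderiv_eq_zero (convex_ball x r).isPreconnected
      (fun y hy => (hd y hy).differentiableAt.differentiableWithinAt)
      (fun y hy => (hd y hy).fderiv) hxb hy.1
    rw [hfu y hy.1, ← this, hA1]
    rfl

/-- Proposition 2.1, contravariant case: a smooth `q`-vector field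
`V` has constant coefficients near `x` iff there are an open neighbourhood `W ∋ x`
and a smooth torsion-free flat Christoffel field `Γ` on `W` with `∇V = 0` on `W`,
i.e. `(DV_y(v))(w₁,…,w_q) + Σ_h V_y(w₁,…,w_h∘Γ_y(v,·),…,w_q) = 0`. -/
theorem constantCoefficientsVec_iff_flatConnection (n q : ℕ)
    (U : Set (Fin n → ℝ)) (hU : IsOpen U)
    (V : (Fin n → ℝ) → (((Fin n → ℝ) →L[ℝ] ℝ) [×q]→L[ℝ] ℝ))
    (hV : ContDiffOn ℝ (⊤ : ℕ∞) V U)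
    (halt : ∀ y ∈ U, ∀ w : Fin q → ((Fin n → ℝ) →L[ℝ] ℝ), ∀ i j, i ≠ j → w i = w j →
      V y w = 0)
    (x : Fin n → ℝ) (hx : x ∈ U) :
    HasConstantCoefficientsVecAt n q U V x ↔
      ∃ W : Set (Fin n → ℝ), IsOpen W ∧ x ∈ W ∧ W ⊆ U ∧
        ∃ Γ : (Fin n → ℝ) → ((Fin n → ℝ) →L[ℝ] (Fin n → ℝ) →L[ℝ] (Fin n → ℝ)),
          ContDiffOn ℝ (⊤ : ℕ∞) Γ W ∧
          -- torsion-free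
          (∀ y ∈ W, ∀ v w : Fin n → ℝ, Γ y v w = Γ y w v) ∧
          -- flat (vanishing curvature)
          (∀ y ∈ W, ∀ v w z : Fin n → ℝ,
            fderiv ℝ (fun t => Γ t w z) y v - fderiv ℝ (fun t => Γ t v z) y w +
              Γ y v (Γ y w z) - Γ y w (Γ y v z) = 0) ∧
          -- ∇V = 0
          (∀ y ∈ W, ∀ v : Fin n → ℝ, ∀ w : Fin q → ((Fin n → ℝ) →L[ℝ] ℝ),
            fderiv ℝ V y v w +
              ∑ h : Fin q, V y (Function.update w h ((w h).comp (Γ y v))) = 0) := by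
  constructor
  · rintro ⟨W, hW, hxW, hWU, u, hu, -, -, hbij, c, hc⟩
    exact ⟨W, hW, hxW, hWU, aux_forward n q U hU V hV W hW hWU u hu hbij c hc⟩
  · rintro ⟨W, hW, hxW, hWU, Γ, hΓ, htor, hflat, hpar⟩
    exact aux_backward n q U hU V hV x W hW hxW hWU Γ hΓ htor hflat hpar
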